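/- Let α be a graph function and let v be a vertex with y_v > y_min. Let x_U = max{x_u : y_u < y_v} and U = {u : y_u < y_v and x_u = x_U}. Then there exist a vertex u' ∈ U and an edge (u',v') of G with v' ∉ U such that α^R_{u'v'} ≥ x_U and y_{v'} ≥ y_v. -/

import Mathlib

open Filter Topology

variable {V : Type*}

/-- Maximum weight of an edge leaving `v` (as a supremum over the finite edge set). -/
noncomputable def outMax (E : V → V → Prop) (α : V → V → ℝ) (v : V) : ℝ :=
  sSup {x : ℝ | ∃ w, E v w ∧ x = α v w}

/-- Maximum weight of an edge entering `v`. -/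
noncomputable def inMax (E : V → V → Prop) (α : V → V → ℝ) (v : V) : ℝ :=
  sSup {x : ℝ | ∃ u, E u v ∧ x = α u v}

/-- A graph function is balanced if the max outgoing weight equals the max incoming
weight at every vertex. -/
def IsBalancedGF (E : V → V → Prop) (α : V → V → ℝ) : Prop :=
  ∀ v, outMax E α v = inMax E α v

/-- Raising imbalance at `v`. -/
noncomputable def rhoR (E : V → V → Prop) (α : V → V → ℝ) (v : V) : ℝ :=
  max 0 (outMax E α v - inMax E α v)

/-- Lowering imbalance at `v`. -/
noncomputable def rhoL (E : V → V → Prop) (α : V → V → ℝ) (v : V) : ℝ :=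
  max 0 (inMax E α v - outMax E α v)

/-- A balancing operation at `v`: add `(α_v^out − α_v^in)/2` to every edge entering `v`
and subtract the same quantity from every edge leaving `v` (a self-loop is unchanged). -/
noncomputable def balanceAt [DecidableEq V] (E : V → V → Prop) (α : V → V → ℝ) (v : V) :
    V → V → ℝ :=
  fun a b =>
    α a b + (if b = v then (outMax E α v - inMax E α v) / 2 else 0)
          - (if a = v then (outMax E α v - inMax E α v) / 2 else 0)

/-- A raising operation at `v`: balance at `v` if the raising imbalance is positive,
otherwise do nothing. -/
noncomputable def raiseOp [DecidableEq V] (E : V → V → Prop) (α : V → V → ℝ) (v : V) :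
    V → V → ℝ :=
  if 0 < rhoR E α v then balanceAt E α v else α

/-- A lowering operation at `v`: balance at `v` if the lowering imbalance is positive,
otherwise do nothing. -/
noncomputable def lowerOp [DecidableEq V] (E : V → V → Prop) (α : V → V → ℝ) (v : V) :
    V → V → ℝ :=
  if 0 < rhoL E α v then balanceAt E α v else α

/-- A sequence of vertices is fair if every vertex appears infinitely often. -/
def Fair (σ : ℕ → V) : Prop := ∀ (v : V) (N : ℕ), ∃ t, N ≤ t ∧ σ t = v

/-- State after `t` raising operations along the sequence `σ`. -/
noncomputable def raiseIter [DecidableEq V] (E : V → V → Prop) (α : V → V → ℝ)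
    (σ : ℕ → V) : ℕ → V → V → ℝ
  | 0 => α
  | t + 1 => raiseOp E (raiseIter E α σ t) (σ t)

/-- State after `t` lowering operations along the sequence `σ`. -/
noncomputable def lowerIter [DecidableEq V] (E : V → V → Prop) (α : V → V → ℝ)
    (σ : ℕ → V) : ℕ → V → V → ℝ
  | 0 => α
  | t + 1 => lowerOp E (lowerIter E α σ t) (σ t)

/-- The raising vector: cumulative amount by which each vertex has been raised after
`t` raising operations along `σ`. -/
noncomputable def rvec [DecidableEq V] (E : V → V → Prop) (α : V → V → ℝ)
    (σ : ℕ → V) : ℕ → V → ℝ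
  | 0 => fun _ => 0
  | t + 1 => fun u =>
      rvec E α σ t u + (if u = σ t then rhoR E (raiseIter E α σ t) (σ t) / 2 else 0)

/-- State after performing raising operations along a finite list of vertices. -/
noncomputable def raiseList [DecidableEq V] (E : V → V → Prop) :
    (V → V → ℝ) → List V → V → V → ℝ
  | α, [] => α
  | α, v :: l => raiseList E (raiseOp E α v) l

/-- Raising vector accumulated along a finite list of raising operations. -/
noncomputable def rvecList [DecidableEq V] (E : V → V → Prop) :
    (V → V → ℝ) → List V → V → ℝ
  | _, [] => fun _ => 0
  | α, v :: l => fun u =>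
      (if u = v then rhoR E α v / 2 else 0) + rvecList E (raiseOp E α v) l u

/-- State after performing (unconditional) balancing operations along a list. -/
noncomputable def balList [DecidableEq V] (E : V → V → Prop) :
    (V → V → ℝ) → List V → V → V → ℝ
  | α, [] => α
  | α, v :: l => balList E (balanceAt E α v) l

/-- State after `t` balancing operations along the sequence `σ`. -/
noncomputable def balIter [DecidableEq V] (E : V → V → Prop) (α : V → V → ℝ)
    (σ : ℕ → V) : ℕ → V → V → ℝ
  | 0 => α
  | t + 1 => balanceAt E (balIter E α σ t) (σ t)

/-- Two graph functions are equivalent if their sums around every directed cycle agree. -/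
def Equivalent (E : V → V → Prop) (α γ : V → V → ℝ) : Prop :=
  ∀ (k : ℕ) (f : ZMod (k + 1) → V), (∀ i, E (f i) (f (i + 1))) →
    (∑ i, α (f i) (f (i + 1))) = ∑ i, γ (f i) (f (i + 1))

/-- The raising-balanced graph function determined by the limiting raising vector. -/
noncomputable def alphaR (α : V → V → ℝ) (rstar : V → ℝ) : V → V → ℝ :=
  fun u v => α u v + rstar v - rstar u

/-- Height of a vertex: `y_v = -r*_v`. -/
noncomputable def height (rstar : V → ℝ) (v : V) : ℝ := -rstar v

/-- Level of a vertex: maximum over incoming edges of `α^R`. -/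
noncomputable def level (E : V → V → Prop) (α : V → V → ℝ) (rstar : V → ℝ) (v : V) : ℝ :=
  inMax E (alphaR α rstar) v

/-- Momentum of a vertex: `m_v = max over edges (u,v) entering v of (α_{uv} − x_v)`. -/
noncomputable def momentum (E : V → V → Prop) (α : V → V → ℝ) (rstar : V → ℝ) (v : V) : ℝ :=
  sSup {c : ℝ | ∃ u, E u v ∧ c = α u v - level E α rstar v}

/-! The limiting raising vector `r*` is the least nonnegative vector that turns `α` into a
raising-balanced graph function. Suppose that every edge of weight at least `x_U` that leaves a
vertex of `U` ended in `U` again. As the map sending a set of vertices to its successors along these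
heavy edges is then monotone and carries `U` into itself, some nonempty `W ⊆ U` is either mapped
onto itself or has no heavy outgoing edge at all. In both cases `r*` can be decreased by a small
constant on `W` without destroying raising-balance, and it stays nonnegative because
`y_u < y_v ≤ 0` on `U`; this contradicts leastness. -/

section Order

variable {X : Type*} [PartialOrder X] [OrderBot X] [WellFoundedLT X]

lemma exists_le_map_eq_self_or_bot {f : X → X} (hf : Monotone f) {a : X} (ha : a ≠ ⊥)
    (hfa : f a ≤ a) : ∃ b ≤ a, b ≠ ⊥ ∧ (f b = b ∨ f b = ⊥) := by
  obtain ⟨b, ⟨hb, hba, hfb⟩, hmin⟩ :=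
    exists_minimal_of_wellFoundedLT (fun b ↦ b ≠ ⊥ ∧ b ≤ a ∧ f b ≤ b) ⟨a, ha, le_rfl, hfa⟩
  refine ⟨b, hba, hb, or_iff_not_imp_right.2 fun hbot ↦ hfb.antisymm ?_⟩
  exact hmin ⟨hbot, hfb.trans hba, hf hfb⟩ hfb

end Order

lemma eventually_forall_add_two_mul_le {ι : Type*} [Finite ι] (f : ι → ℝ) (x : ℝ) :
    ∀ᶠ ε in 𝓝[>] (0 : ℝ), ∀ i, f i < x → f i + 2 * ε ≤ x := by
  simp only [eventually_all]
  intro i h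
  filter_upwards [Ioo_mem_nhdsGT (half_pos (sub_pos.2 h))] with ε hε
  linarith [hε.2]

lemma exists_fair (V : Type*) [Nonempty V] [Countable V] : ∃ σ : ℕ → V, Fair σ := by
  obtain ⟨f, hf⟩ := exists_surjective_nat V
  refine ⟨fun t ↦ f t.unpair.2, fun v N ↦ ?_⟩
  obtain ⟨n, rfl⟩ := hf v
  exact ⟨Nat.pair N n, Nat.left_le_pair N n, by simp⟩

section Extremes

variable {E : V → V → Prop} {α : V → V → ℝ} {v : V}

lemma outMax_eq_inMax_swap (E : V → V → Prop) (α : V → V → ℝ) (v : V) :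
    outMax E α v = inMax (Function.swap E) (Function.swap α) v := rfl

lemma rhoR_nonneg (E : V → V → Prop) (α : V → V → ℝ) (v : V) : 0 ≤ rhoR E α v :=
  le_max_left _ _

lemma rhoR_eq_zero_iff : rhoR E α v = 0 ↔ outMax E α v ≤ inMax E α v := by
  rw [rhoR, max_eq_left_iff, sub_nonpos]

variable [Finite V]

lemma finite_setOf_incoming_weight (E : V → V → Prop) (α : V → V → ℝ) (v : V) :
    {x : ℝ | ∃ u, E u v ∧ x = α u v}.Finite :=
  (Set.finite_range (α · v)).subset (by rintro _ ⟨u, _, rfl⟩; exact ⟨u, rfl⟩)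

lemma le_inMax (α : V → V → ℝ) {u : V} (h : E u v) : α u v ≤ inMax E α v :=
  le_csSup (finite_setOf_incoming_weight E α v).bddAbove ⟨u, h, rfl⟩

lemma le_outMax (α : V → V → ℝ) {w : V} (h : E v w) : α v w ≤ outMax E α v := by
  rw [outMax_eq_inMax_swap]
  exact le_inMax (E := Function.swap E) (Function.swap α) h

lemma exists_eq_inMax (α : V → V → ℝ) (h : ∃ u, E u v) : ∃ u, E u v ∧ inMax E α v = α u v :=
  have ⟨u, hu⟩ := h
  Set.Nonempty.csSup_mem (s := {x | ∃ u, E u v ∧ x = α u v}) ⟨_, u, hu, rfl⟩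
    (finite_setOf_incoming_weight E α v)

lemma inMax_le_iff (h : ∃ u, E u v) {c : ℝ} : inMax E α v ≤ c ↔ ∀ u, E u v → α u v ≤ c := by
  refine ⟨fun hc u hu ↦ (le_inMax α hu).trans hc, fun hc ↦ ?_⟩
  obtain ⟨u, hu, heq⟩ := exists_eq_inMax α h
  exact heq.trans_le (hc u hu)

lemma outMax_le_iff (h : ∃ w, E v w) {c : ℝ} : outMax E α v ≤ c ↔ ∀ w, E v w → α v w ≤ c := by
  rw [outMax_eq_inMax_swap]
  exact inMax_le_iff h

lemma tendsto_inMax (h : ∃ u, E u v) {ι : Type*} {l : Filter ι} {β : ι → V → V → ℝ}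
    (hβ : ∀ u, Tendsto (fun i ↦ β i u v) l (𝓝 (α u v))) :
    Tendsto (fun i ↦ inMax E (β i) v) l (𝓝 (inMax E α v)) := by
  have hfin : {u | E u v}.Finite := Set.toFinite _
  have hne : hfin.toFinset.Nonempty := hfin.toFinset_nonempty.2 h
  have inMax_eq_sup' (γ : V → V → ℝ) : inMax E γ v = hfin.toFinset.sup' hne (γ · v) := by
    simp [inMax, Finset.sup'_eq_csSup_image, Set.image, eq_comm]
  simpa only [inMax_eq_sup'] using Tendsto.finset_sup'_nhds_apply hne fun u _ ↦ hβ u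

lemma tendsto_rhoR (hout : ∃ w, E v w) (hin : ∃ u, E u v) {ι : Type*} {l : Filter ι}
    {β : ι → V → V → ℝ} (hβ : ∀ a b, Tendsto (fun i ↦ β i a b) l (𝓝 (α a b))) :
    Tendsto (fun i ↦ rhoR E (β i) v) l (𝓝 (rhoR E α v)) := by
  have hout' : Tendsto (fun i ↦ outMax E (β i) v) l (𝓝 (outMax E α v)) := by
    simp only [outMax_eq_inMax_swap]
    exact tendsto_inMax hout (hβ v)
  exact tendsto_const_nhds.max (hout'.sub (tendsto_inMax hin (hβ · v)))

end Extremes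

/-- Raising-balanced graph functions: every raising imbalance vanishes. -/
def IsRaisingBalanced (E : V → V → Prop) (α : V → V → ℝ) : Prop :=
  ∀ v, rhoR E α v = 0

lemma isRaisingBalanced_iff_forall_edge [Finite V] {E : V → V → Prop} {α : V → V → ℝ}
    (hout : ∀ v, ∃ w, E v w) (hin : ∀ v, ∃ u, E u v) :
    IsRaisingBalanced E α ↔ ∀ v w, E v w → ∃ u, E u v ∧ α v w ≤ α u v := by
  refine forall_congr' fun v ↦ ?_
  rw [rhoR_eq_zero_iff, outMax_le_iff (hout v)]
  refine forall₂_congr fun w _ ↦ ⟨fun hw ↦ ?_, fun ⟨u, hu, hle⟩ ↦ hle.trans (le_inMax α hu)⟩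
  obtain ⟨u, hu, heq⟩ := exists_eq_inMax α (hin v)
  exact ⟨u, hu, hw.trans_eq heq⟩

lemma alphaR_zero (α : V → V → ℝ) : alphaR α 0 = α := by
  funext a b
  simp [alphaR]

lemma alphaR_add (α : V → V → ℝ) (r s : V → ℝ) :
    alphaR α (r + s) = alphaR (alphaR α r) s := by
  funext a b
  simp only [alphaR, Pi.add_apply]
  ring

lemma add_half_rhoR_le [Finite V] {E : V → V → Prop} {α : V → V → ℝ} {v : V}
    (hout : ∃ w, E v w) (hin : ∃ u, E u v) {r s : V → ℝ} (hsr : s ≤ r)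
    (hr : rhoR E (alphaR α r) v = 0) :
    s v + rhoR E (alphaR α s) v / 2 ≤ r v := by
  have hout_le : outMax E (alphaR α s) v ≤ outMax E (alphaR α r) v + (r v - s v) := by
    refine (outMax_le_iff hout).2 fun w hw ↦ ?_
    have hle := le_outMax (alphaR α r) hw
    simp only [alphaR] at hle ⊢
    linarith [hsr w]
  have hin_le : inMax E (alphaR α r) v ≤ inMax E (alphaR α s) v + (r v - s v) := by
    refine (inMax_le_iff hin).2 fun u hu ↦ ?_
    have hle := le_inMax (alphaR α s) hu
    simp only [alphaR] at hle ⊢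
    linarith [hsr u]
  have hbal := rhoR_eq_zero_iff.1 hr
  have hρ : rhoR E (alphaR α s) v ≤ 2 * (r v - s v) :=
    max_le (by linarith [hsr v]) (by linarith)
  linarith

/-- The nonnegative raising vectors that turn `α` into a raising-balanced graph function. The
limiting raising vector `r*` is the least of them. -/
def raisingPotentials (E : V → V → Prop) (α : V → V → ℝ) : Set (V → ℝ) :=
  {r | 0 ≤ r ∧ IsRaisingBalanced E (alphaR α r)}

section Raising

variable [DecidableEq V] {E : V → V → Prop} {α : V → V → ℝ} {σ : ℕ → V}

lemma raiseOp_eq_alphaR_single (E : V → V → Prop) (α : V → V → ℝ) (v : V) :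
    raiseOp E α v = alphaR α (Pi.single v (rhoR E α v / 2)) := by
  funext a b
  by_cases h : 0 < rhoR E α v
  · have hρ : rhoR E α v = outMax E α v - inMax E α v :=
      max_eq_right ((lt_max_iff.1 h).resolve_left (lt_irrefl 0)).le
    simp [raiseOp, h, balanceAt, alphaR, Pi.single_apply, ← hρ]
  · simp [raiseOp, alphaR, (not_lt.1 h).antisymm (rhoR_nonneg E α v)]

lemma rvec_succ (E : V → V → Prop) (α : V → V → ℝ) (σ : ℕ → V) (t : ℕ) :
    rvec E α σ (t + 1) =
      rvec E α σ t + Pi.single (σ t) (rhoR E (raiseIter E α σ t) (σ t) / 2) := by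
  funext u
  simp [rvec, Pi.single_apply]

lemma raiseIter_eq_alphaR_rvec (E : V → V → Prop) (α : V → V → ℝ) (σ : ℕ → V) (t : ℕ) :
    raiseIter E α σ t = alphaR α (rvec E α σ t) := by
  induction t with
  | zero => exact (alphaR_zero α).symm
  | succ t ih => rw [rvec_succ, alphaR_add, ← ih, raiseIter, raiseOp_eq_alphaR_single]

lemma rvec_nonneg (E : V → V → Prop) (α : V → V → ℝ) (σ : ℕ → V) (t : ℕ) :
    0 ≤ rvec E α σ t := by
  induction t with
  | zero => exact le_rfl
  | succ t ih =>
    rw [rvec_succ]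
    exact add_nonneg ih (Pi.single_nonneg.2 (div_nonneg (rhoR_nonneg ..) two_pos.le))

variable [Finite V]

lemma rvec_le_of_mem_raisingPotentials (hout : ∀ v, ∃ w, E v w) (hin : ∀ v, ∃ u, E u v)
    {r : V → ℝ} (hr : r ∈ raisingPotentials E α) (t : ℕ) : rvec E α σ t ≤ r := by
  induction t with
  | zero => exact hr.1
  | succ t ih =>
    intro u
    rw [rvec_succ, Pi.add_apply, raiseIter_eq_alphaR_rvec]
    obtain rfl | hu := eq_or_ne u (σ t)
    · simpa using add_half_rhoR_le (hout _) (hin _) ih (hr.2 _)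
    · simpa [hu] using ih u

lemma isRaisingBalanced_of_tendsto_rvec (hout : ∀ v, ∃ w, E v w) (hin : ∀ v, ∃ u, E u v)
    (hσ : Fair σ) {r : V → ℝ}
    (hr : ∀ v, Tendsto (fun t ↦ rvec E α σ t v) atTop (𝓝 (r v))) :
    IsRaisingBalanced E (alphaR α r) := by
  intro v
  have hρ : Tendsto (fun t ↦ rhoR E (alphaR α (rvec E α σ t)) v) atTop
      (𝓝 (rhoR E (alphaR α r) v)) :=
    tendsto_rhoR (hout v) (hin v) fun a b ↦ (tendsto_const_nhds.add (hr b)).sub (hr a)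
  have hincr : Tendsto (fun t ↦ 2 * (rvec E α σ (t + 1) v - rvec E α σ t v)) atTop (𝓝 0) := by
    simpa using (((tendsto_add_atTop_iff_nat 1).2 (hr v)).sub (hr v)).const_mul 2
  refine tendsto_nhds_unique_of_frequently_eq hρ hincr ?_
  refine (frequently_atTop.2 (hσ v)).mono fun t ht ↦ ?_
  rw [rvec_succ, raiseIter_eq_alphaR_rvec, ht, Pi.add_apply, Pi.single_eq_same]
  ring

theorem isLeast_raisingPotentials_of_tendsto_rvec (hout : ∀ v, ∃ w, E v w)
    (hin : ∀ v, ∃ u, E u v) (hσ : Fair σ) {r : V → ℝ}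
    (hr : ∀ v, Tendsto (fun t ↦ rvec E α σ t v) atTop (𝓝 (r v))) :
    IsLeast (raisingPotentials E α) r := by
  refine ⟨⟨fun v ↦ ?_, isRaisingBalanced_of_tendsto_rvec hout hin hσ hr⟩, fun s hs v ↦ ?_⟩
  · exact ge_of_tendsto' (hr v) fun t ↦ rvec_nonneg E α σ t v
  · exact le_of_tendsto' (hr v) fun t ↦ rvec_le_of_mem_raisingPotentials hout hin hs t v

end Raising

/-- The edges of weight at least `x`, as a relation, so that `(heavyEdges E α x).image W` is the
set of their heads when their tails range over `W`. -/
def heavyEdges (E : V → V → Prop) (α : V → V → ℝ) (x : ℝ) : SetRel V V :=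
  {e | E e.1 e.2 ∧ x ≤ α e.1 e.2}

section Lowering

variable [Finite V] {E : V → V → Prop} {α : V → V → ℝ}

lemma IsRaisingBalanced.eventually_lower (hout : ∀ v, ∃ w, E v w) (hin : ∀ v, ∃ u, E u v)
    (hα : IsRaisingBalanced E α) {x : ℝ} {W : Set V} (hWx : ∀ v ∈ W, inMax E α v = x)
    (hW : (heavyEdges E α x).image W = W ∨ (heavyEdges E α x).image W = ∅) :
    ∀ᶠ ε in 𝓝[>] (0 : ℝ), IsRaisingBalanced E (alphaR α (-W.indicator fun _ ↦ ε)) := by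
  filter_upwards [self_mem_nhdsWithin,
    eventually_forall_add_two_mul_le (fun e : V × V ↦ α e.1 e.2) x] with ε (hε : 0 < ε) hgap
  set s : V → ℝ := W.indicator fun _ ↦ ε
  have hs_mem {u : V} (hu : u ∈ W) : s u = ε := Set.indicator_of_mem hu _
  have hs_notMem {u : V} (hu : u ∉ W) : s u = 0 := Set.indicator_of_notMem hu _
  have hs_nonneg (u : V) : 0 ≤ s u := Set.indicator_nonneg (fun _ _ ↦ hε.le) u
  have hweight (a b : V) : alphaR α (-s) a b = α a b - s b + s a := by
    simp only [alphaR, Pi.neg_apply]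
    ring
  simp only [isRaisingBalanced_iff_forall_edge hout hin, hweight] at hα ⊢
  intro v w hvw
  by_cases hv : v ∈ W
  · rw [hs_mem hv]
    rcases hW with hW | hW
    -- Weights inside `W` do not change, so a heavy edge entering `v` from `W` remains heavy.
    · obtain ⟨u, hu, huv, hxu⟩ : v ∈ (heavyEdges E α x).image W := hW.symm ▸ hv
      refine ⟨u, huv, ?_⟩
      rw [hs_mem hu]
      obtain hvw_light | hvw_heavy := lt_or_ge (α v w) x
      · linarith [hgap (v, w) hvw_light, hs_nonneg w]
      · have hw : w ∈ W := hW ▸ ⟨v, hv, hvw, hvw_heavy⟩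
        linarith [le_inMax α hvw, hWx w hw, hs_mem hw]
    -- The edges entering `v` lose at most `ε` and those leaving it gain at most `ε`, which the gap
    -- of `2 * ε` below `x` absorbs.
    · have hvw_light : α v w < x :=
        lt_of_not_ge fun h ↦ (hW ▸ ⟨v, hv, hvw, h⟩ : w ∈ (∅ : Set V))
      obtain ⟨u, huv, heq⟩ := exists_eq_inMax α (hin v)
      exact ⟨u, huv, by linarith [hgap (v, w) hvw_light, hs_nonneg w, hs_nonneg u, hWx v hv]⟩
  · obtain ⟨u, huv, hle⟩ := hα v w hvw
    exact ⟨u, huv, by linarith [hs_notMem hv, hs_nonneg u, hs_nonneg w]⟩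

lemma not_isLeast_raisingPotentials (hout : ∀ v, ∃ w, E v w) (hin : ∀ v, ∃ u, E u v)
    {r : V → ℝ} {x : ℝ} {W : Set V} (hne : W.Nonempty) (hpos : ∀ v ∈ W, 0 < r v)
    (hWx : ∀ v ∈ W, level E α r v = x)
    (hW : (heavyEdges E (alphaR α r) x).image W = W ∨
      (heavyEdges E (alphaR α r) x).image W = ∅) :
    ¬IsLeast (raisingPotentials E α) r := by
  intro hr
  have hsmall : ∀ᶠ ε in 𝓝[>] (0 : ℝ), ∀ v ∈ W, ε < r v :=
    (eventually_all_finite W.toFinite).2 fun v hv ↦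
      (eventually_lt_nhds (hpos v hv)).filter_mono nhdsWithin_le_nhds
  obtain ⟨ε, hbal, hε_lt, hε : 0 < ε⟩ := ((hr.1.2.eventually_lower hout hin hWx hW).and
    (hsmall.and self_mem_nhdsWithin)).exists
  have hmem : r + -W.indicator (fun _ ↦ ε) ∈ raisingPotentials E α := by
    refine ⟨fun v ↦ ?_, by rwa [alphaR_add]⟩
    rw [← sub_eq_add_neg, Pi.sub_apply, Pi.zero_apply, sub_nonneg]
    exact Set.indicator_apply_le' (fun hv ↦ (hε_lt v hv).le) fun _ ↦ hr.1.1 v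
  obtain ⟨v, hv⟩ := hne
  have hle := hr.2 hmem v
  rw [Pi.add_apply, Pi.neg_apply, Set.indicator_of_mem hv] at hle
  linarith

theorem exists_edge_leaving_of_isLeast (hout : ∀ v, ∃ w, E v w) (hin : ∀ v, ∃ u, E u v)
    {r : V → ℝ} (hr : IsLeast (raisingPotentials E α) r) {S : Set V} (hS : S.Nonempty)
    (hpos : ∀ v ∈ S, 0 < r v) :
    ∃ u ∈ S, (∀ w ∈ S, level E α r w ≤ level E α r u) ∧
      ∃ z ∉ S, E u z ∧ level E α r u ≤ alphaR α r u z := by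
  obtain ⟨m, hm, hmax⟩ := Set.exists_max_image S (level E α r) S.toFinite hS
  set x := level E α r m
  set U : Set V := {u ∈ S | level E α r u = x}
  by_contra! hlight
  have hU : (heavyEdges E (alphaR α r) x).image U ⊆ U := by
    rintro z ⟨u, ⟨huS, hux⟩, huz, hx_le⟩
    have hz : z ∈ S := by
      by_contra hz
      exact (hlight u huS (hux ▸ hmax) z hz huz).not_ge (hux ▸ hx_le)
    exact ⟨hz, (hmax z hz).antisymm (hx_le.trans (le_inMax (alphaR α r) huz))⟩
  have hUne : U ≠ ∅ := Set.nonempty_iff_ne_empty.1 ⟨m, hm, rfl⟩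
  obtain ⟨W, hWU, hWne, hW⟩ := exists_le_map_eq_self_or_bot SetRel.image_mono hUne hU
  exact not_isLeast_raisingPotentials hout hin (Set.nonempty_iff_ne_empty.2 hWne)
    (fun v hv ↦ hpos v (hWU hv).1) (fun v hv ↦ (hWU hv).2) hW hr

end Lowering

theorem exists_escaping_edge_general [Finite V] [DecidableEq V] {E : V → V → Prop}
    (hout : ∀ v, ∃ w, E v w) (hin : ∀ v, ∃ u, E u v) {α : V → V → ℝ} {rstar : V → ℝ}
    {σ : ℕ → V} (hσ : Fair σ)
    (hrstar : ∀ v, Tendsto (fun t ↦ rvec E α σ t v) atTop (𝓝 (rstar v)))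
    {v : V} (hv : ∃ u, height rstar u < height rstar v) {xU : ℝ}
    (hxU : xU = sSup {c : ℝ | ∃ u, height rstar u < height rstar v ∧ c = level E α rstar u}) :
    ∃ u' v',
      (height rstar u' < height rstar v ∧ level E α rstar u' = xU) ∧
      E u' v' ∧
      ¬(height rstar v' < height rstar v ∧ level E α rstar v' = xU) ∧
      xU ≤ alphaR α rstar u' v' ∧
      height rstar v ≤ height rstar v' := by
  have hleast := isLeast_raisingPotentials_of_tendsto_rvec hout hin hσ hrstar
  have hpos : ∀ u ∈ {u | height rstar u < height rstar v}, 0 < rstar u :=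
    fun u hu ↦ (hleast.1.1 v).trans_lt (neg_lt_neg_iff.1 hu)
  obtain ⟨u', hu', hmax, v', hv', huv, hheavy⟩ :=
    exists_edge_leaving_of_isLeast hout hin hleast hv hpos
  have hlevel : xU = level E α rstar u' :=
    hxU.trans (IsGreatest.csSup_eq
      ⟨⟨u', hu', rfl⟩, by rintro _ ⟨w, hw, rfl⟩; exact hmax w hw⟩)
  exact ⟨u', v', ⟨hu', hlevel.symm⟩, huv, fun h ↦ hv' h.1, hlevel.trans_le hheavy, not_lt.1 hv'⟩

/-- If `y_v > y_min`, set `x_U = max{x_u : y_u < y_v}` and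
`U = {u : y_u < y_v ∧ x_u = x_U}`. Then there are `u' ∈ U` and an edge `(u',v')`
with `v' ∉ U`, `α^R_{u'v'} ≥ x_U` and `y_{v'} ≥ y_v`. -/
theorem exists_escaping_edge
    [Fintype V] [Nonempty V] [DecidableEq V] (E : V → V → Prop)
    (hout : ∀ v, ∃ w, E v w) (hin : ∀ v, ∃ u, E u v)
    (hconn : ∀ u v : V, Relation.ReflTransGen E u v)
    (α : V → V → ℝ) (rstar : V → ℝ)
    (hrstar : ∀ σ : ℕ → V, Fair σ → ∀ v,
      Tendsto (fun t => rvec E α σ t v) atTop (nhds (rstar v)))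
    (v : V)
    (hv : Finset.univ.inf' Finset.univ_nonempty (height rstar) < height rstar v)
    (xU : ℝ)
    (hxU : xU = sSup {c : ℝ | ∃ u, height rstar u < height rstar v ∧
      c = level E α rstar u}) :
    ∃ u' v',
      (height rstar u' < height rstar v ∧ level E α rstar u' = xU) ∧
      E u' v' ∧
      ¬(height rstar v' < height rstar v ∧ level E α rstar v' = xU) ∧
      xU ≤ alphaR α rstar u' v' ∧
      height rstar v ≤ height rstar v' := by
  obtain ⟨σ, hσ⟩ := exists_fair V
  obtain ⟨u, -, hu⟩ := (Finset.inf'_lt_iff _).1 hv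
  exact exists_escaping_edge_general hout hin hσ (hrstar σ hσ) ⟨u, hu⟩ hxU
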